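/- The diagonal second partial derivative ∂²π_ε/∂h_+² = (e^ε/Z)(cosh(h_+) − e^ε sinh²(h_+)/Z) is strictly positive for all (h_+, h_-) ∈ ℝ², where Z = e^ε cosh(h_+) + e^{-ε} cosh(h_-). -/

import Mathlib

noncomputable def piE (ε h₁ h₂ : ℝ) : ℝ :=
  Real.log (2 * (Real.exp ε * Real.cosh h₁ + Real.exp (-ε) * Real.cosh h₂))

/-!
As a function of `h₁`, the potential `piE` is the logarithm of a multiple of `Z = a cosh h₁ + b`,
where `a = exp ε` and `b = exp (-ε) * cosh h₂` are positive. Since `cosh² - sinh² = 1`, the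
quadratic terms in the numerator of its second derivative cancel, leaving `a (a + b cosh h₁) / Z²`.
-/

section LogAffineCosh

open Real

variable {a b x : ℝ}

lemma mul_cosh_add_pos (ha : 0 < a) (hb : 0 ≤ b) (x : ℝ) : 0 < a * cosh x + b := by
  positivity

lemma hasDerivAt_mul_cosh_add (a b x : ℝ) :
    HasDerivAt (fun y => a * cosh y + b) (a * sinh x) x :=
  ((hasDerivAt_cosh x).const_mul a).add_const b

lemma hasDerivAt_log_mul_cosh_add {c : ℝ} (hc : c ≠ 0) (hZ : a * cosh x + b ≠ 0) :
    HasDerivAt (fun y => log (c * (a * cosh y + b))) (a * sinh x / (a * cosh x + b)) x := by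
  have hlog := ((hasDerivAt_mul_cosh_add a b x).const_mul c).log (mul_ne_zero hc hZ)
  rwa [mul_div_mul_left _ _ hc] at hlog

lemma hasDerivAt_mul_sinh_div_mul_cosh_add (hZ : a * cosh x + b ≠ 0) :
    HasDerivAt (fun y => a * sinh y / (a * cosh y + b))
      (a / (a * cosh x + b) * (cosh x - a * sinh x ^ 2 / (a * cosh x + b))) x := by
  have hquot := ((hasDerivAt_sinh x).const_mul a).fun_div (hasDerivAt_mul_cosh_add a b x) hZ
  exact hquot.congr_deriv (by field_simp)

lemma cosh_sub_mul_sinh_sq_div (hZ : a * cosh x + b ≠ 0) :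
    cosh x - a * sinh x ^ 2 / (a * cosh x + b) = (a + b * cosh x) / (a * cosh x + b) := by
  rw [sub_div' hZ, sinh_sq]
  ring

lemma cosh_sub_mul_sinh_sq_div_pos (ha : 0 < a) (hb : 0 ≤ b) (x : ℝ) :
    0 < cosh x - a * sinh x ^ 2 / (a * cosh x + b) := by
  have hZ := mul_cosh_add_pos ha hb x
  rw [cosh_sub_mul_sinh_sq_div hZ.ne']
  positivity

end LogAffineCosh

theorem piE_second_deriv_plus_pos (ε h₁ h₂ : ℝ)
    (Z : ℝ) (hZ : Z = Real.exp ε * Real.cosh h₁ + Real.exp (-ε) * Real.cosh h₂) :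
    deriv (fun x => deriv (fun x' => piE ε x' h₂) x) h₁ =
      (Real.exp ε / Z) * (Real.cosh h₁ - Real.exp ε * Real.sinh h₁ ^ 2 / Z) ∧
      0 < deriv (fun x => deriv (fun x' => piE ε x' h₂) x) h₁ := by
  subst hZ
  have ha : 0 < Real.exp ε := Real.exp_pos ε
  have hb : 0 ≤ Real.exp (-ε) * Real.cosh h₂ := by positivity
  have hZ := mul_cosh_add_pos ha hb
  have first_deriv : (fun x => deriv (fun x' => piE ε x' h₂) x) = fun x =>
      Real.exp ε * Real.sinh x / (Real.exp ε * Real.cosh x + Real.exp (-ε) * Real.cosh h₂) :=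
    funext fun x => (hasDerivAt_log_mul_cosh_add two_ne_zero (hZ x).ne').deriv
  rw [first_deriv, (hasDerivAt_mul_sinh_div_mul_cosh_add (hZ h₁).ne').deriv]
  exact ⟨rfl, mul_pos (div_pos ha (hZ h₁)) (cosh_sub_mul_sinh_sq_div_pos ha hb h₁)⟩
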